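/- arXiv:2307.06649 — 3 statements merged into one kernel-verified Lean document; each statement's English description precedes it below -/
import Mathlib

section
/- Let G be a finite connected simple bridgeless cubic graph such that the line graph L(G) is not a complete graph, and let v be a vertex of L(G). Then every minimal vertex cut of L(G) centered at v has cardinality 2, 3, or 4; in particular no single vertex of L(G) is a cut vertex. -/
open SimpleGraph

/-- A set `S` of vertices of a graph `H` is a vertex cut if deleting `S` disconnects `H`:
the subgraph induced on the complement of `S` is not preconnected. -/
def IsVertexCut {W : Type*} (H : SimpleGraph W) (S : Set W) : Prop :=
  ¬ (H.induce Sᶜ).Preconnected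

/-- A minimal vertex cut of `H` centered at `v`: a vertex cut `S` with `v ∈ S` such that
no proper subset `S \ {v'}` (for `v' ∈ S`) is a vertex cut, and whose cardinality is
minimal among all such sets. -/
def IsMinimalCenteredVertexCut {W : Type*} (H : SimpleGraph W) (v : W) (S : Set W) : Prop :=
  IsVertexCut H S ∧ v ∈ S ∧ (∀ v' ∈ S, ¬ IsVertexCut H (S \ {v'})) ∧
    ∀ T : Set W, IsVertexCut H T → v ∈ T → (∀ v' ∈ T, ¬ IsVertexCut H (T \ {v'})) →
      S.ncard ≤ T.ncard

theorem exists_centered_cut {W : Type*} (H : SimpleGraph W) (hH : H.Preconnected)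
    (hclaw : ∀ s f b c, H.Adj s f → H.Adj s b → H.Adj s c → f ≠ b → ¬ H.Adj f b →
      c = f ∨ H.Adj c f ∨ c = b ∨ H.Adj c b)
    (v f g : W) (hvf : H.Adj v f) (hvg : H.Adj v g) (hfg : f ≠ g) (hnfg : ¬ H.Adj f g) :
    ∃ T : Set W, T ⊆ H.neighborSet f ∧ IsVertexCut H T ∧ v ∈ T ∧
      ∀ v' ∈ T, ¬ IsVertexCut H (T \ {v'}) := by
  classical
  -- the component of `g` after deleting the neighbours of `f`
  set K := H.induce (H.neighborSet f)ᶜ with hK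
  have hgK : g ∈ (H.neighborSet f)ᶜ := hnfg
  have hfK : f ∈ (H.neighborSet f)ᶜ := by simp
  set B : Set W := {b | ∃ h : b ∈ (H.neighborSet f)ᶜ, K.Reachable ⟨b, h⟩ ⟨g, hgK⟩} with hB
  have hgB : g ∈ B := ⟨hgK, Reachable.refl _⟩
  have hBcl : ∀ b ∈ B, ∀ c, H.Adj b c → ¬ H.Adj f c → c ∈ B := by
    rintro b ⟨hb, hr⟩ c hbc hc
    refine ⟨hc, Reachable.trans (Adj.reachable ?_) hr⟩
    exact hbc.symm
  have hfB : f ∉ B := by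
    rintro ⟨h, ⟨p⟩⟩
    cases p with
    | nil => exact hfg rfl
    | @cons _ m _ hadj q =>
      exact m.2 hadj
  have hBn : ∀ b ∈ B, ¬ H.Adj f b := fun b hb => hb.1
  set T : Set W := {t | H.Adj f t ∧ ∃ b ∈ B, H.Adj t b} with hT
  have hBT : ∀ b ∈ B, b ∉ T := fun b hb h => hBn b hb h.1
  have hfT : f ∉ T := fun h => H.irrefl h.1
  refine ⟨T, fun t ht => ht.1, ?_, ⟨hvf.symm, g, hgB, hvg⟩, ?_⟩
  · intro hpre
    obtain ⟨p⟩ := hpre ⟨g, hBT g hgB⟩ ⟨f, hfT⟩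
    have key : ∀ (a c : ↥Tᶜ), (H.induce Tᶜ).Walk a c → (a : W) ∈ B → (c : W) ∈ B := by
      intro a c p
      induction p with
      | nil => exact id
      | @cons a m c hadj q ih =>
        intro ha
        apply ih
        have hadj' : H.Adj a m := hadj
        exact hBcl _ ha _ hadj' (fun h => m.2 ⟨h, a, ha, hadj'.symm⟩)
    exact hfB (key _ _ p hgB)
  · intro t ht hcut
    apply hcut
    set T' := T \ {t} with hT'
    have htT' : t ∈ T'ᶜ := by simp [hT']
    have sub : ∀ c, c ∉ T → c ∈ T'ᶜ := fun c hc h => hc h.1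
    let R : W → Prop := fun c => ∃ h : c ∈ T'ᶜ, (H.induce T'ᶜ).Reachable ⟨c, h⟩ ⟨t, htT'⟩
    have Rt : R t := ⟨htT', Reachable.refl _⟩
    have Rstep : ∀ c d, H.Adj c d → c ∈ T'ᶜ → R d → R c := by
      rintro c d hcd hc ⟨hd, hr⟩
      refine ⟨hc, Reachable.trans (Adj.reachable ?_) hr⟩
      exact hcd
    have Rf : R f := Rstep f t ht.1 (sub f hfT) Rt
    have RB : ∀ b ∈ B, R b := by
      obtain ⟨b₀, hb₀, htb₀⟩ := ht.2
      have Rb₀ : R b₀ := Rstep b₀ t htb₀.symm (sub _ (hBT _ hb₀)) Rt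
      have key : ∀ (a c : ↥(H.neighborSet f)ᶜ), K.Walk a c → (R c) → (R a) := by
        intro a c p
        induction p with
        | nil => exact id
        | @cons a m c hadj q ih =>
          intro hc
          exact Rstep _ _ hadj (sub _ fun h => a.2 h.1) (ih hc)
      rintro b ⟨hb, hr⟩
      obtain ⟨hb₀', hr₀⟩ := hb₀
      obtain ⟨p⟩ := hr.trans hr₀.symm
      exact key _ _ p Rb₀
    have all : ∀ c d, H.Walk c d → (d ∉ T' → R d) → (c ∉ T' → R c) := by
      intro c d p
      induction p with
      | nil => exact id
      | @cons c m d hadj q ih =>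
        intro hd hc
        by_cases hm : m ∈ T'
        · obtain ⟨⟨hfm, b, hb, hmb⟩, -⟩ := hm
          rcases hclaw m f b c hfm.symm hmb hadj.symm (fun h => hfB (h ▸ hb)) (hBn b hb)
            with h | h | h | h
          · exact h ▸ Rf
          · exact Rstep _ _ h hc Rf
          · exact h ▸ RB b hb
          · exact Rstep _ _ h hc (RB b hb)
        · exact Rstep _ _ hadj hc (ih hd hm)
    have all' : ∀ c : ↥T'ᶜ, (H.induce T'ᶜ).Reachable c ⟨t, htT'⟩ := by
      intro c
      obtain ⟨p⟩ := hH c t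
      obtain ⟨_, hr⟩ := all _ _ p (fun _ => Rt) c.2
      exact hr
    intro c d
    exact (all' c).trans (all' d).symm

theorem lineGraph_claw {V : Type*} (G : SimpleGraph V) (s f b c : G.edgeSet)
    (h1 : G.lineGraph.Adj s f) (h2 : G.lineGraph.Adj s b) (h3 : G.lineGraph.Adj s c)
    (hne : f ≠ b) (hn : ¬ G.lineGraph.Adj f b) :
    c = f ∨ G.lineGraph.Adj c f ∨ c = b ∨ G.lineGraph.Adj c b := by
  rw [lineGraph_adj_iff_exists] at *
  obtain ⟨-, x, hxs, hxf⟩ := h1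
  obtain ⟨-, y, hys, hyb⟩ := h2
  obtain ⟨-, z, hzs, hzc⟩ := h3
  have hxy : x ≠ y := by
    rintro rfl
    exact hn ⟨hne, x, hxf, hyb⟩
  have hs : (s : Sym2 V) = s(x, y) := (Sym2.mem_and_mem_iff hxy).1 ⟨hxs, hys⟩
  rw [hs, Sym2.mem_iff] at hzs
  rcases hzs with rfl | rfl
  · by_cases h : c = f
    · exact Or.inl h
    · exact Or.inr (Or.inl ⟨h, z, hzc, hxf⟩)
  · by_cases h : c = b
    · exact Or.inr (Or.inr (Or.inl h))
    · exact Or.inr (Or.inr (Or.inr ⟨h, z, hzc, hyb⟩))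

theorem lineGraph_reach {V : Type*} (G : SimpleGraph V) (T : Set G.edgeSet) (x y : V)
    (p : (G.deleteEdges (Subtype.val '' T)).Walk x y) :
    ∀ (e e' : ↥Tᶜ), x ∈ (e : G.edgeSet).1 → y ∈ (e' : G.edgeSet).1 →
      (G.lineGraph.induce Tᶜ).Reachable e e' := by
  have base : ∀ (e e' : ↥Tᶜ) (x : V), x ∈ (e : G.edgeSet).1 → x ∈ (e' : G.edgeSet).1 →
      (G.lineGraph.induce Tᶜ).Reachable e e' := by
    intro e e' x h h'
    by_cases hee : e = e'
    · exact hee ▸ Reachable.refl _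
    · apply Adj.reachable
      show G.lineGraph.Adj e.1 e'.1
      rw [lineGraph_adj_iff_exists]
      exact ⟨fun h => hee (Subtype.ext h), x, h, h'⟩
  induction p with
  | nil => intro e e' h h'; exact base e e' _ h h'
  | @cons x m y hadj q ih =>
    intro e e' h h'
    rw [deleteEdges_adj] at hadj
    let k : G.edgeSet := ⟨s(x, m), hadj.1⟩
    have hk : k ∈ Tᶜ := fun hkT => hadj.2 ⟨k, hkT, rfl⟩
    exact (base e ⟨k, hk⟩ x h (Sym2.mem_mk_left _ _)).trans
      (ih ⟨k, hk⟩ e' (Sym2.mem_mk_right _ _) h')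

theorem lineGraph_not_cut {V : Type*} (G : SimpleGraph V) (T : Set G.edgeSet)
    (h : (G.deleteEdges (Subtype.val '' T)).Preconnected) : ¬ IsVertexCut G.lineGraph T := by
  intro hc
  apply hc
  intro e e'
  obtain ⟨p⟩ := h e.1.1.out.1 e'.1.1.out.1
  exact lineGraph_reach G T _ _ p e e' (Sym2.out_fst_mem _) (Sym2.out_fst_mem _)

theorem exists_other_neighbor {V : Type*} [Fintype V] (G : SimpleGraph V)
    [DecidableRel G.Adj] (hcubic : ∀ v : V, G.degree v = 3) (x a b : V) :
    ∃ z, G.Adj x z ∧ z ≠ a ∧ z ≠ b := by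
  classical
  have : ({a, b} : Finset V).card < (G.neighborFinset x).card := by
    rw [card_neighborFinset_eq_degree, hcubic]
    exact lt_of_le_of_lt Finset.card_le_two (by norm_num)
  obtain ⟨z, hz, hz'⟩ := Finset.exists_mem_notMem_of_card_lt_card this
  simp at hz hz'
  exact ⟨z, hz, hz'.1, hz'.2⟩

theorem lineGraph_neighborSet_ncard {V : Type*} [Fintype V] (G : SimpleGraph V)
    [DecidableRel G.Adj] (hcubic : ∀ v : V, G.degree v = 3) (f : G.edgeSet) :
    (G.lineGraph.neighborSet f).ncard ≤ 4 := by
  classical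
  obtain ⟨f, hf⟩ := f
  induction f with
  | h x z =>
  have hxz : G.Adj x z := hf
  rw [← Set.ncard_image_of_injective _ Subtype.val_injective]
  let N : Finset (Sym2 V) := ((G.incidenceFinset x).erase s(x, z)) ∪
    ((G.incidenceFinset z).erase s(x, z))
  have hN : N.card ≤ 4 := by
    refine (Finset.card_union_le _ _).trans ?_
    rw [Finset.card_erase_of_mem, Finset.card_erase_of_mem, card_incidenceFinset_eq_degree,
      card_incidenceFinset_eq_degree, hcubic, hcubic]
    · simp [incidenceSet, hxz]
    · simp [incidenceSet, hxz]
  refine le_trans ?_ hN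
  rw [← Set.ncard_coe_finset]
  apply Set.ncard_le_ncard _ (Finset.finite_toSet _)
  rintro _ ⟨e, he, rfl⟩
  rw [mem_neighborSet, lineGraph_adj_iff_exists] at he
  obtain ⟨hne, w, hw, hwe⟩ := he
  have hne' : (e : Sym2 V) ≠ s(x, z) := fun h => hne (Subtype.ext h.symm)
  have he := e.2
  simp only [Sym2.mem_iff] at hw
  rcases hw with rfl | rfl
  · simp [N, incidenceSet, hne', hwe]
  · simp [N, incidenceSet, hne', hwe]

/-- **Sizes of minimal centered vertex cuts in the line graph of a bridgeless cubic
graph.**  Let `G` be a finite connected simple bridgeless cubic graph whose line graph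
`L(G)` is not complete, and let `v` be a vertex of `L(G)`.  Then every minimal vertex cut
of `L(G)` centered at `v` has cardinality `2`, `3` or `4`; in particular no single vertex
of `L(G)` is a cut vertex. -/
theorem minimal_centered_vertexCut_card {V : Type*} [Fintype V] (G : SimpleGraph V)
    [DecidableRel G.Adj] (hconn : G.Connected)
    (hbridgeless : ∀ e : Sym2 V, ¬ G.IsBridge e) (hcubic : ∀ v : V, G.degree v = 3)
    (hnotcomplete : G.lineGraph ≠ ⊤) (v : G.edgeSet) :
    (∀ S : Set G.edgeSet, IsMinimalCenteredVertexCut G.lineGraph v S →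
      S.ncard = 2 ∨ S.ncard = 3 ∨ S.ncard = 4) ∧
    (∀ w : G.edgeSet, ¬ IsVertexCut G.lineGraph {w}) := by
  classical
  have hcutv : ∀ w : G.edgeSet, ¬ IsVertexCut G.lineGraph {w} := by
    intro w
    apply lineGraph_not_cut
    rw [Set.image_singleton]
    obtain ⟨w, hw⟩ := w
    induction w with
    | h x y =>
    exact (hconn.connected_delete_edge_of_not_isBridge (hbridgeless s(x, y))).preconnected
  refine ⟨?_, hcutv⟩
  rintro S ⟨hS, hvS, -, hmin⟩
  have hfin : S.Finite := Set.toFinite S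
  have h0 : S.ncard ≠ 0 := fun h => by
    rw [Set.ncard_eq_zero hfin] at h
    simp [h] at hvS
  have h1 : S.ncard ≠ 1 := fun h => by
    obtain ⟨w, rfl⟩ := Set.ncard_eq_one.1 h
    exact hcutv w hS
  have hH : G.lineGraph.Preconnected := by
    have h := lineGraph_not_cut G ∅ (by simpa using hconn.preconnected)
    rw [IsVertexCut, not_not] at h
    intro a b
    exact (h ⟨a, id⟩ ⟨b, id⟩).map (Embedding.induce _).toHom
  have h4 : ∃ T : Set G.edgeSet, T.ncard ≤ 4 ∧ IsVertexCut G.lineGraph T ∧ v ∈ T ∧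
      ∀ v' ∈ T, ¬ IsVertexCut G.lineGraph (T \ {v'}) := by
    clear hmin hvS
    obtain ⟨v, hv⟩ := v
    induction v with
    | h x y =>
    have hxy : G.Adj x y := hv
    obtain ⟨z, hxz, hzy, -⟩ := exists_other_neighbor G hcubic x y y
    obtain ⟨u, hyu, hux, huz⟩ := exists_other_neighbor G hcubic y x z
    have hxy' := hxy.ne
    have hxz' := hxz.ne
    obtain ⟨T, hT, h⟩ := exists_centered_cut G.lineGraph hH (lineGraph_claw G) ⟨s(x, y), hv⟩
      ⟨s(x, z), hxz⟩ ⟨s(y, u), hyu⟩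
      (by
        rw [lineGraph_adj_iff_exists]
        refine ⟨?_, x, by simp, by simp⟩
        simp; grind)
      (by
        rw [lineGraph_adj_iff_exists]
        refine ⟨?_, y, by simp, by simp⟩
        simp; grind)
      (by simp; grind)
      (by
        rw [lineGraph_adj_iff_exists]
        simp; grind)
    exact ⟨T, (Set.ncard_le_ncard hT (Set.toFinite _)).trans
      (lineGraph_neighborSet_ncard G hcubic _), h⟩
  obtain ⟨T, hT4, hT, hvT, hTm⟩ := h4
  have := hmin T hT hvT hTm
  omega
end

section
/- Let G be a finite connected simple bridgeless cubic graph, let v be a vertex of the line graph L(G), and let S be a minimal vertex cut of L(G) centered at v. Then no triangle of L(G) has all three of its vertices contained in S. -/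
open SimpleGraph

theorem vcut_reach {W : Type*} (H : SimpleGraph W) (S : Set W) (e : W)
    (h2 : ¬ IsVertexCut H (S \ {e})) (heS : e ∈ S) (f : (Sᶜ : Set W)) :
    ∃ g : (Sᶜ : Set W), H.Adj e g ∧ (H.induce Sᶜ).Reachable f g := by
  classical
  unfold IsVertexCut at h2
  push Not at h2
  have hf : (f : W) ∈ ((S \ {e})ᶜ : Set W) := fun h => f.2 h.1
  have he : e ∈ ((S \ {e})ᶜ : Set W) := fun h => h.2 rfl
  obtain ⟨p⟩ := h2 ⟨f, hf⟩ ⟨e, he⟩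
  have key : ∀ (u w : ((S \ {e})ᶜ : Set W)) (p : (H.induce (S \ {e})ᶜ).Walk u w),
      (w : W) = e → ∀ hu : (u : W) ∈ (Sᶜ : Set W),
      ∃ g : (Sᶜ : Set W), H.Adj e g ∧ (H.induce Sᶜ).Reachable ⟨u, hu⟩ g := by
    intro u w p
    induction p with
    | nil => intro h hu; rw [h] at hu; exact absurd heS hu
    | @cons u x w hadj p ih =>
      intro h hu
      have hadj' : H.Adj u x := hadj
      by_cases hx : (x : W) = e
      · exact ⟨⟨u, hu⟩, by rw [hx] at hadj'; exact hadj'.symm, Reachable.refl _⟩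
      · have hxS : (x : W) ∈ (Sᶜ : Set W) := fun hs => x.2 ⟨hs, hx⟩
        obtain ⟨g, hg, hr⟩ := ih h hxS
        refine ⟨g, hg, Reachable.trans (Adj.reachable ?_) hr⟩
        exact hadj'
  exact key _ _ p rfl f.2

theorem line_reach {V : Type*} (G : SimpleGraph V) (S : Set G.edgeSet) (x : V)
    (g h : (Sᶜ : Set G.edgeSet)) (hg : x ∈ (g : G.edgeSet).1) (hh : x ∈ (h : G.edgeSet).1) :
    (G.lineGraph.induce Sᶜ).Reachable g h := by
  by_cases hgh : g = h
  · rw [hgh]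
  · apply Adj.reachable
    change G.lineGraph.Adj g h
    rw [lineGraph_adj_iff_exists]
    exact ⟨fun h' => hgh (Subtype.ext h'), x, hg, hh⟩

/-- Every edge outside the cut reaches one at an end of a given edge in the cut. -/
theorem line_reach_end {V : Type*} (G : SimpleGraph V) (S : Set G.edgeSet) (e : G.edgeSet)
    (x y : V) (hexy : e.1 = s(x, y)) (heS : e ∈ S)
    (h2 : ¬ IsVertexCut G.lineGraph (S \ {e})) (f : (Sᶜ : Set G.edgeSet)) :
    ∃ g : (Sᶜ : Set G.edgeSet), (x ∈ (g : G.edgeSet).1 ∨ y ∈ (g : G.edgeSet).1) ∧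
      (G.lineGraph.induce Sᶜ).Reachable f g := by
  obtain ⟨g, hg, hr⟩ := vcut_reach G.lineGraph S e h2 heS f
  rw [lineGraph_adj_iff_exists] at hg
  obtain ⟨-, z, hz, hzg⟩ := hg
  rw [hexy, Sym2.mem_iff] at hz
  refine ⟨g, ?_, hr⟩
  rcases hz with rfl | rfl
  · exact Or.inl hzg
  · exact Or.inr hzg

/-- The two ends of an edge of the cut see different components. -/
theorem line_split {V : Type*} (G : SimpleGraph V) (S : Set G.edgeSet) (e : G.edgeSet)
    (x y : V) (hexy : e.1 = s(x, y)) (heS : e ∈ S) (h1 : IsVertexCut G.lineGraph S)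
    (h2 : ¬ IsVertexCut G.lineGraph (S \ {e})) :
    ∃ g h : (Sᶜ : Set G.edgeSet), x ∈ (g : G.edgeSet).1 ∧ y ∈ (h : G.edgeSet).1 ∧
      ¬ (G.lineGraph.induce Sᶜ).Reachable g h := by
  unfold IsVertexCut SimpleGraph.Preconnected at h1
  push Not at h1
  obtain ⟨f₁, f₂, hf⟩ := h1
  obtain ⟨g, hg, hfg⟩ := line_reach_end G S e x y hexy heS h2 f₁
  obtain ⟨h, hh, hfh⟩ := line_reach_end G S e x y hexy heS h2 f₂
  have hn : ¬ (G.lineGraph.induce Sᶜ).Reachable g h :=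
    fun hr => hf (hfg.trans (hr.trans hfh.symm))
  rcases hg with hg | hg <;> rcases hh with hh | hh
  · exact absurd (line_reach G S x g h hg hh) hn
  · exact ⟨g, h, hg, hh, hn⟩
  · exact ⟨h, g, hh, hg, fun hr => hn hr.symm⟩
  · exact absurd (line_reach G S y g h hg hh) hn

theorem star_absurd {V : Type*} [Fintype V]
    (G : SimpleGraph V) [DecidableRel G.Adj] (hcubic : ∀ v : V, G.degree v = 3)
    (S : Set G.edgeSet) (h1 : IsVertexCut G.lineGraph S)
    (h2 : ∀ e ∈ S, ¬ IsVertexCut G.lineGraph (S \ {e})) (a b c : G.edgeSet)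
    (hab : a ≠ b) (hbc : b ≠ c) (hac : a ≠ c) (haS : a ∈ S) (hbS : b ∈ S) (hcS : c ∈ S)
    (p : V) (ha : p ∈ a.1) (hb : p ∈ b.1) (hc : p ∈ c.1) : False := by
  classical
  obtain ⟨q, hq⟩ := Sym2.mem_iff_exists.1 ha
  obtain ⟨g, -, hg, -, -⟩ := line_split G S a p q hq haS h1 (h2 a haS)
  have hga : g.1 ≠ a := fun h => g.2 (h ▸ haS)
  have hgb : g.1 ≠ b := fun h => g.2 (h ▸ hbS)
  have hgc : g.1 ≠ c := fun h => g.2 (h ▸ hcS)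
  have hcard := G.card_incidenceFinset_eq_degree p
  rw [hcubic] at hcard
  have hsub : ({g.1.1, a.1, b.1, c.1} : Finset (Sym2 V)) ⊆ G.incidenceFinset p := by
    intro e he
    simp only [Finset.mem_insert, Finset.mem_singleton] at he
    rw [mem_incidenceFinset]
    rcases he with rfl | rfl | rfl | rfl
    · exact ⟨g.1.2, hg⟩
    · exact ⟨a.2, ha⟩
    · exact ⟨b.2, hb⟩
    · exact ⟨c.2, hc⟩
  have h4 : ({g.1.1, a.1, b.1, c.1} : Finset (Sym2 V)).card = 4 := by
    rw [Finset.card_insert_of_notMem, Finset.card_insert_of_notMem,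
      Finset.card_insert_of_notMem, Finset.card_singleton] <;>
      simp [← Subtype.ext_iff, hab, hbc, hac, hga, hgb, hgc]
  have := Finset.card_le_card hsub
  omega

/-- **No triangle of the line graph lies inside a minimal centered vertex cut.**
Let `G` be a finite connected simple bridgeless cubic graph, `v` a vertex of the line
graph `L(G)` and `S` a minimal vertex cut of `L(G)` centered at `v`.  Then no triangle of
`L(G)` has all three of its vertices contained in `S`. -/
theorem no_triangle_in_minimal_centered_vertexCut {V : Type*} [Fintype V]
    (G : SimpleGraph V) [DecidableRel G.Adj] (hconn : G.Connected)
    (hbridgeless : ∀ e : Sym2 V, ¬ G.IsBridge e) (hcubic : ∀ v : V, G.degree v = 3)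
    (v : G.edgeSet) (S : Set G.edgeSet)
    (hS : IsMinimalCenteredVertexCut G.lineGraph v S) :
    ∀ a b c : G.edgeSet, G.lineGraph.Adj a b → G.lineGraph.Adj b c →
      G.lineGraph.Adj a c → ¬ (a ∈ S ∧ b ∈ S ∧ c ∈ S) := by
  intro a b c hab hbc hac ⟨haS, hbS, hcS⟩
  obtain ⟨h1, -, h2, -⟩ := hS
  rw [lineGraph_adj_iff_exists] at hab hbc hac
  obtain ⟨nab, p, hpa, hpb⟩ := hab
  obtain ⟨nbc, q, hqb, hqc⟩ := hbc
  obtain ⟨nac, r, hra, hrc⟩ := hac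
  have star := star_absurd G hcubic S h1 h2 a b c nab nbc nac haS hbS hcS
  by_cases hpq : p = q
  · exact star p hpa hpb (hpq ▸ hqc)
  by_cases hpr : p = r
  · exact star p hpa hpb (hpr ▸ hrc)
  by_cases hqr : q = r
  · exact star q (hqr ▸ hra) hqb hqc
  have ea : a.1 = s(p, r) := (Sym2.mem_and_mem_iff hpr).1 ⟨hpa, hra⟩
  have eb : b.1 = s(p, q) := (Sym2.mem_and_mem_iff hpq).1 ⟨hpb, hqb⟩
  have ec : c.1 = s(q, r) := (Sym2.mem_and_mem_iff hqr).1 ⟨hqc, hrc⟩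
  obtain ⟨P, Q, hP, hQ, hPQ⟩ := line_split G S b p q eb hbS h1 (h2 b hbS)
  obtain ⟨Q', R, hQ', hR, hQR⟩ := line_split G S c q r ec hcS h1 (h2 c hcS)
  -- the third edge at `q` reaches an edge at `p` or at `r`
  obtain ⟨g, hg, hr⟩ := line_reach_end G S a p r ea haS (h2 a haS) Q
  rcases hg with hg | hg
  · exact hPQ ((line_reach G S p P g hP hg).trans hr.symm)
  · exact hQR ((line_reach G S q Q' Q hQ' hQ).trans (hr.trans (line_reach G S r g R hg hR)))
end

section
/- Let G be a finite connected simple bridgeless cubic graph. Then the line graph L(G) has no cut vertex: for every vertex w of L(G), the graph obtained from L(G) by deleting w remains connected. -/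
open SimpleGraph

theorem lineGraph_aux_share {V : Type*} (G : SimpleGraph V) (w : G.edgeSet)
    (a : V) (f g : {f : G.edgeSet | f ≠ w}) (hf : a ∈ (f.1 : Sym2 V)) (hg : a ∈ (g.1 : Sym2 V)) :
    (G.lineGraph.induce {f : G.edgeSet | f ≠ w}).Reachable f g := by
  by_cases h : f = g
  · rw [h]
  · apply Adj.reachable
    rw [comap_adj]
    exact lineGraph_adj_iff_exists.2 ⟨fun h' => h (Subtype.ext h'), a, hf, hg⟩

theorem lineGraph_aux_walk {V : Type*} (G : SimpleGraph V) (w : G.edgeSet)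
    {a b : V} (p : (G.deleteEdges {(w : Sym2 V)}).Walk a b) :
    ∀ (f g : {f : G.edgeSet | f ≠ w}), a ∈ (f.1 : Sym2 V) → b ∈ (g.1 : Sym2 V) →
    (G.lineGraph.induce {f : G.edgeSet | f ≠ w}).Reachable f g := by
  induction p with
  | nil => exact fun f g hf hg => lineGraph_aux_share G w _ f g hf hg
  | @cons a c b h p ih =>
    intro f g hf hg
    rw [deleteEdges_adj] at h
    let e : {f : G.edgeSet | f ≠ w} :=
      ⟨⟨s(a, c), h.1⟩, fun h' => h.2 (by rw [← h']; rfl)⟩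
    exact (lineGraph_aux_share G w a f e hf (Sym2.mem_mk_left a c)).trans
      (ih e g (Sym2.mem_mk_right a c) hg)

/-- **The line graph of a bridgeless cubic graph has no cut vertex.**
Let `G` be a finite connected simple bridgeless cubic graph.  Then for every vertex `w`
of the line graph `L(G)`, the graph obtained from `L(G)` by deleting `w` (and all edges
incident to `w`) remains connected. -/
theorem lineGraph_no_cutVertex_of_bridgeless_cubic {V : Type*} [Fintype V]
    (G : SimpleGraph V) [DecidableRel G.Adj] (hconn : G.Connected)
    (hbridgeless : ∀ e : Sym2 V, ¬ G.IsBridge e) (hcubic : ∀ v : V, G.degree v = 3) :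
    ∀ w : G.edgeSet, (G.lineGraph.induce {f : G.edgeSet | f ≠ w}).Connected := by
  rintro ⟨w, hw⟩
  induction w with | h u v
  have hH := hconn.connected_delete_edge_of_not_isBridge (hbridgeless s(u, v))
  have hc : 1 < (G.neighborFinset u).card := by
    rw [card_neighborFinset_eq_degree, hcubic]; norm_num
  obtain ⟨x, hx, hxv⟩ := Finset.exists_mem_ne hc v
  rw [mem_neighborFinset] at hx
  refine (connected_iff _).2 ⟨fun f g => ?_, ⟨⟨⟨s(u, x), hx⟩, fun h => hxv ?_⟩⟩⟩
  · obtain ⟨p⟩ := hH.preconnected (f.1 : Sym2 V).out.1 (g.1 : Sym2 V).out.1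
    exact lineGraph_aux_walk G _ p f g (Sym2.out_fst_mem _) (Sym2.out_fst_mem _)
  · exact Sym2.congr_right.1 (congrArg Subtype.val h)
end
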